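/- Under Assumption 1 and the |H| = 1 hypothesis, consider the convex program (Q): minimize Σ_{j∈N} x_j² − w over (μ, x, w) ∈ ℝ^m × ℝ^n × ℝ subject to: μ ≥ 0; d* + Σ_{i∈M} ξ_i μ_i = 0; c_1 + Σ_{i∈M} a_{i1} μ_i = 0; (D_{jj} − d*) x_j + c_j + Σ_{i∈M} a_{ij} μ_i = 0 for every j ∈ N, j ≠ 1; and ξ_i w + 2 Σ_{j∈N} a_{ij} x_j ≤ b_i for every i ∈ M. If (Q) is infeasible or its optimal value is nonnegative, then the second convex relaxation (C') is exact, i.e., q* = c*, and hence the Shor relaxation is exact. -/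

import Mathlib

/-!
The relaxation (C') has a minimizer `(x, w)`: some nonnegative combination of the linear
constraints has positive weight on `w`, which together with `∑ xⱼ² ≤ w` bounds the feasible set
(`exists_conv1_minimizer`).

Everything rests on `w = ∑ xⱼ²` at such a minimizer. If `∑ xⱼ² < w`, the quadratic constraint is
inactive, so the objective gradient is nonnegative along every direction that does not increase
the active linear constraints (`conv1_gradient_nonneg`). Farkas' lemma (`farkas`) then expresses
the negative gradient as a nonnegative combination of the active constraint normals, and its
coefficients `μ` make `(μ, x, w)` feasible for (Q) (`exists_multiplier`) with objective
`∑ xⱼ² - w < 0`, contrary to the hypothesis.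

Once `w = ∑ xⱼ²`, the point `x` is feasible for (P) with value `q*`. Conversely each Shor-feasible
`(X, x)` yields the (C')-feasible point `(x, tr X)` with no larger objective, so that
`q* ≤ v* ≤ c* ≤ q*`.
-/

/- Common definitions for diagonal QCQPs, the Shor relaxation, and the
convex relaxations, following "Exactness conditions for the Shor relaxation
of diagonal QCQPs". Optimal values are infima in the extended reals. -/

namespace DiagQCQP2011

open Matrix Finset

noncomputable section

/-- Trace inner product `Y • X` of two square matrices. -/
def traceIP {n : ℕ} (Y X : Matrix (Fin n) (Fin n) ℝ) : ℝ :=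
  ∑ j, ∑ k, Y j k * X j k

/-- Objective of the QCQP (P): `xᵀ D x + 2 cᵀ x`. -/
def qObj {n : ℕ} (D : Matrix (Fin n) (Fin n) ℝ) (c : Fin n → ℝ) (x : Fin n → ℝ) : ℝ :=
  (∑ j, ∑ k, x j * D j k * x k) + 2 * ∑ j, c j * x j

/-- Feasibility for the QCQP (P): `xᵀ Aⁱ x + 2 aᵢᵀ x ≤ bᵢ` for all `i`. -/
def qFeas {n m : ℕ} (A : Fin m → Matrix (Fin n) (Fin n) ℝ) (a : Fin m → Fin n → ℝ)
    (b : Fin m → ℝ) (x : Fin n → ℝ) : Prop :=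
  ∀ i, (∑ j, ∑ k, x j * A i j k * x k) + 2 * ∑ j, a i j * x j ≤ b i

/-- Optimal value `c*` of the QCQP (P), as an infimum in the extended reals. -/
def qVal {n m : ℕ} (D : Matrix (Fin n) (Fin n) ℝ) (A : Fin m → Matrix (Fin n) (Fin n) ℝ)
    (c : Fin n → ℝ) (a : Fin m → Fin n → ℝ) (b : Fin m → ℝ) : EReal :=
  sInf {v : EReal | ∃ x : Fin n → ℝ, qFeas A a b x ∧ v = ((qObj D c x : ℝ) : EReal)}

/-- Objective of the Shor relaxation (S): `D • X + 2 cᵀ x`. -/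
def shorObj {n : ℕ} (D : Matrix (Fin n) (Fin n) ℝ) (c : Fin n → ℝ)
    (X : Matrix (Fin n) (Fin n) ℝ) (x : Fin n → ℝ) : ℝ :=
  traceIP D X + 2 * ∑ j, c j * x j

/-- Feasibility for the Shor relaxation (S). -/
def shorFeas {n m : ℕ} (A : Fin m → Matrix (Fin n) (Fin n) ℝ) (a : Fin m → Fin n → ℝ)
    (b : Fin m → ℝ) (X : Matrix (Fin n) (Fin n) ℝ) (x : Fin n → ℝ) : Prop :=
  X.IsSymm ∧ (∀ i, traceIP (A i) X + 2 * ∑ j, a i j * x j ≤ b i) ∧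
    (X - vecMulVec x x).PosSemidef

/-- Optimal value `v*` of the Shor relaxation (S). -/
def shorVal {n m : ℕ} (D : Matrix (Fin n) (Fin n) ℝ) (A : Fin m → Matrix (Fin n) (Fin n) ℝ)
    (c : Fin n → ℝ) (a : Fin m → Fin n → ℝ) (b : Fin m → ℝ) : EReal :=
  sInf {v : EReal | ∃ (X : Matrix (Fin n) (Fin n) ℝ) (x : Fin n → ℝ),
    shorFeas A a b X x ∧ v = ((shorObj D c X x : ℝ) : EReal)}

/-- Strict feasibility (interior point) for the Shor relaxation (S). -/
def shorStrictFeas {n m : ℕ} (A : Fin m → Matrix (Fin n) (Fin n) ℝ) (a : Fin m → Fin n → ℝ)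
    (b : Fin m → ℝ) (X : Matrix (Fin n) (Fin n) ℝ) (x : Fin n → ℝ) : Prop :=
  X.IsSymm ∧ (∀ i, traceIP (A i) X + 2 * ∑ j, a i j * x j < b i) ∧
    (X - vecMulVec x x).PosDef

/-- Assumption 1: (P) is feasible, some nonnegative combination of the `Aⁱ` is
positive definite, and (S) has a strictly feasible (interior) point. -/
def Assumption1 {n m : ℕ} (A : Fin m → Matrix (Fin n) (Fin n) ℝ) (a : Fin m → Fin n → ℝ)
    (b : Fin m → ℝ) : Prop :=
  (∃ x : Fin n → ℝ, qFeas A a b x) ∧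
  (∃ y : Fin m → ℝ, (∀ i, 0 ≤ y i) ∧ (∑ i, y i • A i).PosDef) ∧
  (∃ (X : Matrix (Fin n) (Fin n) ℝ) (x : Fin n → ℝ), shorStrictFeas A a b X x)

/-- Objective of the convex relaxation (C). -/
def convObj {n : ℕ} (D : Matrix (Fin n) (Fin n) ℝ) (c : Fin n → ℝ)
    (x z : Fin n → ℝ) : ℝ :=
  (∑ j, D j j * z j) + 2 * ∑ j, c j * x j

/-- Feasibility for the convex relaxation (C). -/
def convFeas {n m : ℕ} (A : Fin m → Matrix (Fin n) (Fin n) ℝ) (a : Fin m → Fin n → ℝ)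
    (b : Fin m → ℝ) (x z : Fin n → ℝ) : Prop :=
  (∀ i, (∑ j, A i j j * z j) + 2 * ∑ j, a i j * x j ≤ b i) ∧ ∀ j, x j ^ 2 ≤ z j

/-- Optimal value `p*` of the convex relaxation (C). -/
def convVal {n m : ℕ} (D : Matrix (Fin n) (Fin n) ℝ) (A : Fin m → Matrix (Fin n) (Fin n) ℝ)
    (c : Fin n → ℝ) (a : Fin m → Fin n → ℝ) (b : Fin m → ℝ) : EReal :=
  sInf {v : EReal | ∃ x z : Fin n → ℝ,
    convFeas A a b x z ∧ v = ((convObj D c x z : ℝ) : EReal)}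

/-- KKT point of the convex relaxation (C). -/
def KKT {n m : ℕ} (D : Matrix (Fin n) (Fin n) ℝ) (A : Fin m → Matrix (Fin n) (Fin n) ℝ)
    (c : Fin n → ℝ) (a : Fin m → Fin n → ℝ) (b : Fin m → ℝ)
    (x z : Fin n → ℝ) (μ : Fin m → ℝ) (ν : Fin n → ℝ) : Prop :=
  (∀ i, 0 ≤ μ i) ∧ (∀ j, 0 ≤ ν j) ∧
  (∀ j, D j j + (∑ i, μ i * A i j j) - ν j = 0) ∧
  (∀ j, c j + (∑ i, μ i * a i j) + ν j * x j = 0) ∧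
  convFeas A a b x z ∧
  (∀ i, μ i * (b i - (∑ j, A i j j * z j) - 2 * ∑ j, a i j * x j) = 0) ∧
  (∀ j, ν j * (z j - x j ^ 2) = 0)

/-- The polyhedral set `S_k` of multipliers, whose emptiness (for all `k`)
is the exactness condition of Burer–Ye. -/
def Sk {n m : ℕ} (D : Matrix (Fin n) (Fin n) ℝ) (A : Fin m → Matrix (Fin n) (Fin n) ℝ)
    (c : Fin n → ℝ) (a : Fin m → Fin n → ℝ) (k : Fin n) : Set (Fin m → ℝ) :=
  {μ | (∀ i, 0 ≤ μ i) ∧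
       D k k + (∑ i, μ i * A i k k) = 0 ∧
       c k + (∑ i, μ i * a i k) = 0 ∧
       ∀ j, j ≠ k → 0 ≤ D j j + (∑ i, μ i * A i j j)}

/-- Partition hypothesis: `{N_h}` partitions `N`, within each class all
constraint matrices have a common diagonal value `ξ^{ih}`, and in each class the
minimal diagonal entry of `D` is attained at the unique index `j_h`. -/
def PartitionHyp {n m : ℕ} {H : Type*} (D : Matrix (Fin n) (Fin n) ℝ)
    (A : Fin m → Matrix (Fin n) (Fin n) ℝ) (Nh : H → Finset (Fin n))
    (ξ : Fin m → H → ℝ) (jh : H → Fin n) : Prop :=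
  (∀ j : Fin n, ∃! h : H, j ∈ Nh h) ∧
  (∀ i h, ∀ j ∈ Nh h, A i j j = ξ i h) ∧
  (∀ h, jh h ∈ Nh h) ∧
  (∀ h, ∀ j ∈ Nh h, j ≠ jh h → D (jh h) (jh h) < D j j)

/-- Objective of the second convex relaxation (C'). -/
def conv2Obj {n : ℕ} {H : Type*} [Fintype H] (D : Matrix (Fin n) (Fin n) ℝ)
    (c : Fin n → ℝ) (Nh : H → Finset (Fin n)) (jh : H → Fin n)
    (x : Fin n → ℝ) (w : H → ℝ) : ℝ :=
  (∑ h, D (jh h) (jh h) * w h) +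
    (∑ h, ∑ j ∈ Nh h, (D j j - D (jh h) (jh h)) * x j ^ 2) + 2 * ∑ j, c j * x j

/-- Feasibility for the second convex relaxation (C'). -/
def conv2Feas {n m : ℕ} {H : Type*} [Fintype H] (ξ : Fin m → H → ℝ)
    (a : Fin m → Fin n → ℝ) (b : Fin m → ℝ) (Nh : H → Finset (Fin n))
    (x : Fin n → ℝ) (w : H → ℝ) : Prop :=
  (∀ i, (∑ h, ξ i h * w h) + 2 * ∑ j, a i j * x j ≤ b i) ∧
  ∀ h, (∑ j ∈ Nh h, x j ^ 2) ≤ w h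

/-- Optimal value `q*` of the second convex relaxation (C'). -/
def conv2Val {n m : ℕ} {H : Type*} [Fintype H] (D : Matrix (Fin n) (Fin n) ℝ)
    (ξ : Fin m → H → ℝ) (c : Fin n → ℝ) (a : Fin m → Fin n → ℝ) (b : Fin m → ℝ)
    (Nh : H → Finset (Fin n)) (jh : H → Fin n) : EReal :=
  sInf {v : EReal | ∃ (x : Fin n → ℝ) (w : H → ℝ),
    conv2Feas ξ a b Nh x w ∧ v = ((conv2Obj D c Nh jh x w : ℝ) : EReal)}

/-- KKT point of the second convex relaxation (C'). -/
def KKT2 {n m : ℕ} {H : Type*} [Fintype H] (D : Matrix (Fin n) (Fin n) ℝ)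
    (ξ : Fin m → H → ℝ) (c : Fin n → ℝ) (a : Fin m → Fin n → ℝ) (b : Fin m → ℝ)
    (Nh : H → Finset (Fin n)) (jh : H → Fin n)
    (x : Fin n → ℝ) (w : H → ℝ) (μ : Fin m → ℝ) (γ : H → ℝ) : Prop :=
  (∀ i, 0 ≤ μ i) ∧ (∀ h, 0 ≤ γ h) ∧
  (∀ h, D (jh h) (jh h) + (∑ i, μ i * ξ i h) - γ h = 0) ∧
  (∀ h, ∀ j ∈ Nh h,
    (D j j - D (jh h) (jh h)) * x j + c j + (∑ i, μ i * a i j) + γ h * x j = 0) ∧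
  conv2Feas ξ a b Nh x w ∧
  (∀ i, μ i * (b i - (∑ h, ξ i h * w h) - 2 * ∑ j, a i j * x j) = 0) ∧
  (∀ h, γ h * (w h - ∑ j ∈ Nh h, x j ^ 2) = 0)

/-- Objective of the second convex relaxation (C') in the case `|H| = 1`
(with `j_1 = 0` scaled out; `d* = D 0 0`). -/
def conv1Obj {n : ℕ} [NeZero n] (D : Matrix (Fin n) (Fin n) ℝ) (c : Fin n → ℝ)
    (x : Fin n → ℝ) (w : ℝ) : ℝ :=
  D 0 0 * w + (∑ j, (D j j - D 0 0) * x j ^ 2) + 2 * ∑ j, c j * x j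

/-- Feasibility for the second convex relaxation (C') in the case `|H| = 1`. -/
def conv1Feas {n m : ℕ} (ξ : Fin m → ℝ) (a : Fin m → Fin n → ℝ) (b : Fin m → ℝ)
    (x : Fin n → ℝ) (w : ℝ) : Prop :=
  (∀ i, ξ i * w + 2 * ∑ j, a i j * x j ≤ b i) ∧ (∑ j, x j ^ 2) ≤ w

/-- Optimal value `q*` of the second convex relaxation (C') in the case `|H| = 1`. -/
def conv1Val {n m : ℕ} [NeZero n] (D : Matrix (Fin n) (Fin n) ℝ) (ξ : Fin m → ℝ)
    (c : Fin n → ℝ) (a : Fin m → Fin n → ℝ) (b : Fin m → ℝ) : EReal :=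
  sInf {v : EReal | ∃ (x : Fin n → ℝ) (w : ℝ),
    conv1Feas ξ a b x w ∧ v = ((conv1Obj D c x w : ℝ) : EReal)}

/-- The function `x_j(μ)` from the paper (meaningful for `j ≠ 0`, `|H| = 1`). -/
def xmu {n m : ℕ} [NeZero n] (D : Matrix (Fin n) (Fin n) ℝ) (c : Fin n → ℝ)
    (a : Fin m → Fin n → ℝ) (μ : Fin m → ℝ) (j : Fin n) : ℝ :=
  -(c j + ∑ i, μ i * a i j) / (D j j - D 0 0)

end


/-! ### Farkas' lemma -/

/-- **Farkas' lemma** for finitely many linear functionals on a real vector space. -/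
lemma farkas {V ι : Type*} [AddCommGroup V] [Module ℝ V] [DecidableEq ι] (s : Finset ι) :
    ∀ (f : ι → V →ₗ[ℝ] ℝ) (g : V →ₗ[ℝ] ℝ),
      (∀ v, (∀ i ∈ s, f i v ≤ 0) → g v ≤ 0) →
      ∃ μ : ι → ℝ, (∀ i, 0 ≤ μ i) ∧ (∀ i, i ∉ s → μ i = 0) ∧
        ∀ v, g v = ∑ i ∈ s, μ i * f i v := by
  induction s using Finset.induction_on with
  | empty =>
    intro f g h
    refine ⟨fun _ => 0, by simp, by simp, fun v => ?_⟩
    have h1 := h v (by simp)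
    have h2 := h (-v) (by simp)
    rw [map_neg] at h2
    simp only [Finset.sum_empty]
    linarith
  | insert k s hk ih =>
    intro f g h
    by_cases hc : ∀ v, (∀ i ∈ s, f i v ≤ 0) → g v ≤ 0
    · obtain ⟨μ, h0, h1, h2⟩ := ih f g hc
      refine ⟨μ, h0, fun i hi => h1 i fun h' => hi (Finset.mem_insert_of_mem h'), fun v => ?_⟩
      rw [Finset.sum_insert hk, h1 k hk, h2 v]
      ring
    · -- A direction `v₀` showing that the constraint `k` is needed must satisfy `0 < f k v₀`.
      push Not at hc
      obtain ⟨v₀, hv₀, hg⟩ := hc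
      have hfk : 0 < f k v₀ := by
        by_contra hle
        have := h v₀ (by
          intro i hi
          rcases Finset.mem_insert.1 hi with rfl | hi
          · exact not_lt.1 hle
          · exact hv₀ i hi)
        linarith
      -- Composing with the projection along `v₀` onto `ker (f k)` eliminates constraint `k`.
      obtain ⟨μ, h0, h1, h2⟩ := ih (fun i => f i - (f i v₀ / f k v₀) • f k)
        (g - (g v₀ / f k v₀) • f k) (by
          intro v hv
          have key := h (v - (f k v / f k v₀) • v₀) (by
            intro i hi
            rcases Finset.mem_insert.1 hi with rfl | hi
            · simp only [map_sub, map_smul, smul_eq_mul]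
              rw [div_mul_cancel₀ _ hfk.ne']
              simp
            · have := hv i hi
              simp only [LinearMap.sub_apply, LinearMap.smul_apply, smul_eq_mul] at this
              simp only [map_sub, map_smul, smul_eq_mul]
              have e : f k v / f k v₀ * f i v₀ = f i v₀ / f k v₀ * f k v := by ring
              rw [e]
              exact this)
          simp only [map_sub, map_smul, smul_eq_mul] at key
          simp only [LinearMap.sub_apply, LinearMap.smul_apply, smul_eq_mul]
          have e : f k v / f k v₀ * g v₀ = g v₀ / f k v₀ * f k v := by ring
          rw [← e]
          exact key)
      have hsum : ∑ i ∈ s, μ i * f i v₀ ≤ 0 :=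
        Finset.sum_nonpos fun i hi => mul_nonpos_of_nonneg_of_nonpos (h0 i) (hv₀ i hi)
      refine ⟨fun i => if i = k then (g v₀ - ∑ i ∈ s, μ i * f i v₀) / f k v₀ else μ i,
        ?_, ?_, ?_⟩
      · intro i
        dsimp only
        split_ifs
        · exact div_nonneg (by linarith) hfk.le
        · exact h0 i
      · intro i hi
        rw [Finset.mem_insert, not_or] at hi
        simp [hi.1, h1 i hi.2]
      · intro v
        have hv := h2 v
        simp only [LinearMap.sub_apply, LinearMap.smul_apply, smul_eq_mul] at hv
        rw [Finset.sum_insert hk]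
        have e1 : ∑ i ∈ s, (if i = k then (g v₀ - ∑ i ∈ s, μ i * f i v₀) / f k v₀ else μ i) * f i v
            = ∑ i ∈ s, μ i * f i v := by
          refine Finset.sum_congr rfl fun i hi => ?_
          rw [if_neg]
          rintro rfl
          exact hk hi
        have e2 : ∑ i ∈ s, μ i * (f i v - f i v₀ / f k v₀ * f k v)
            = ∑ i ∈ s, μ i * f i v - (∑ i ∈ s, μ i * f i v₀) / f k v₀ * f k v := by
          rw [Finset.sum_div, Finset.sum_mul, ← Finset.sum_sub_distrib]
          refine Finset.sum_congr rfl fun i _ => ?_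
          ring
        rw [e2] at hv
        rw [e1]
        simp only [if_true]
        rw [sub_div]
        linarith

/-! ### First-order optimality in (C') -/

/-- The linear functional `(x, w) ↦ p w + 2 qᵀ x`. -/
def linFun {n : ℕ} (p : ℝ) (q : Fin n → ℝ) : ((Fin n → ℝ) × ℝ) →ₗ[ℝ] ℝ where
  toFun v := p * v.2 + 2 * ∑ j, q j * v.1 j
  map_add' u v := by
    simp only [Prod.fst_add, Prod.snd_add, Pi.add_apply, mul_add, Finset.sum_add_distrib]
    ring
  map_smul' r v := by
    simp only [Prod.smul_fst, Prod.smul_snd, Pi.smul_apply, smul_eq_mul, RingHom.id_apply]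
    have : ∑ j, q j * (r * v.1 j) = r * ∑ j, q j * v.1 j := by
      rw [Finset.mul_sum]
      exact Finset.sum_congr rfl fun j _ => by ring
    rw [this]
    ring

lemma linFun_apply {n : ℕ} (p : ℝ) (q : Fin n → ℝ) (v : (Fin n → ℝ) × ℝ) :
    linFun p q v = p * v.2 + 2 * ∑ j, q j * v.1 j := rfl

/-- Second-order expansion of the (C') objective along a line; it is exact because the objective
is quadratic. -/
lemma conv1Obj_add {n : ℕ} [NeZero n] (D : Matrix (Fin n) (Fin n) ℝ) (c x dx : Fin n → ℝ)
    (w dw t : ℝ) :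
    conv1Obj D c (x + t • dx) (w + t * dw) = conv1Obj D c x w
      + t * (linFun (D 0 0) (fun j => (D j j - D 0 0) * x j + c j) (dx, dw)
        + t * ∑ j, (D j j - D 0 0) * dx j ^ 2) := by
  have e1 : ∑ j, (D j j - D 0 0) * (x j + t * dx j) ^ 2
      = ∑ j, (D j j - D 0 0) * x j ^ 2 + 2 * t * ∑ j, (D j j - D 0 0) * x j * dx j
        + t * t * ∑ j, (D j j - D 0 0) * dx j ^ 2 := by
    simp only [Finset.mul_sum, ← Finset.sum_add_distrib]
    exact Finset.sum_congr rfl fun j _ => by ring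
  have e2 : ∑ j, c j * (x j + t * dx j) = ∑ j, c j * x j + t * ∑ j, c j * dx j := by
    simp only [Finset.mul_sum, ← Finset.sum_add_distrib]
    exact Finset.sum_congr rfl fun j _ => by ring
  have e3 : ∑ j, ((D j j - D 0 0) * x j + c j) * dx j
      = ∑ j, (D j j - D 0 0) * x j * dx j + ∑ j, c j * dx j := by
    simp only [← Finset.sum_add_distrib]
    exact Finset.sum_congr rfl fun j _ => by ring
  simp only [conv1Obj, linFun_apply, Pi.add_apply, Pi.smul_apply, smul_eq_mul, e1, e2, e3]
  ring

/-- First-order optimality at a minimizer of (C') where the quadratic constraint is inactive. -/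
lemma conv1_gradient_nonneg {n m : ℕ} [NeZero n] (D : Matrix (Fin n) (Fin n) ℝ)
    (ξ : Fin m → ℝ) (c : Fin n → ℝ) (a : Fin m → Fin n → ℝ) (b : Fin m → ℝ)
    (x : Fin n → ℝ) (w : ℝ) (hf : conv1Feas ξ a b x w)
    (hopt : ∀ y v, conv1Feas ξ a b y v → conv1Obj D c x w ≤ conv1Obj D c y v)
    (hlt : ∑ j, x j ^ 2 < w) (d : (Fin n → ℝ) × ℝ)
    (hd : ∀ i, linFun (ξ i) (a i) (x, w) = b i → linFun (ξ i) (a i) d ≤ 0) :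
    0 ≤ linFun (D 0 0) (fun j => (D j j - D 0 0) * x j + c j) d := by
  obtain ⟨dx, dw⟩ := d
  -- All constraints hold at `(x, w) + t d` for every small `t > 0`.
  have hquad : ∀ᶠ t in nhdsWithin (0 : ℝ) (Set.Ioi 0),
      ∑ j, (x j + t * dx j) ^ 2 < w + t * dw := by
    apply Filter.Eventually.filter_mono nhdsWithin_le_nhds
    apply ContinuousAt.eventually_lt
    · fun_prop
    · fun_prop
    · simpa using hlt
  have hlin : ∀ᶠ t in nhdsWithin (0 : ℝ) (Set.Ioi 0), ∀ i,
      linFun (ξ i) (a i) ((x, w) + t • (dx, dw)) ≤ b i := by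
    rw [Filter.eventually_all]
    intro i
    have hle : linFun (ξ i) (a i) (x, w) ≤ b i := hf.1 i
    rcases hle.eq_or_lt with he | hl
    · filter_upwards [self_mem_nhdsWithin] with t ht
      rw [map_add, map_smul, he, smul_eq_mul]
      have := mul_nonpos_of_nonneg_of_nonpos (le_of_lt ht) (hd i he)
      linarith
    · have : ∀ᶠ t in nhdsWithin (0 : ℝ) (Set.Ioi 0),
          linFun (ξ i) (a i) (x, w) + t * linFun (ξ i) (a i) (dx, dw) < b i := by
        apply Filter.Eventually.filter_mono nhdsWithin_le_nhds
        apply ContinuousAt.eventually_lt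
        · fun_prop
        · fun_prop
        · simpa using hl
      filter_upwards [this] with t ht
      rw [map_add, map_smul, smul_eq_mul]
      exact ht.le
  set G := linFun (D 0 0) (fun j => (D j j - D 0 0) * x j + c j) (dx, dw) with hG
  set q := ∑ j, (D j j - D 0 0) * dx j ^ 2 with hq
  have hpos : ∀ᶠ t in nhdsWithin (0 : ℝ) (Set.Ioi 0), 0 ≤ G + t * q := by
    filter_upwards [hquad, hlin, self_mem_nhdsWithin] with t h1 h2 ht
    have := hopt (x + t • dx) (w + t * dw) ⟨fun i => h2 i, h1.le⟩
    rw [conv1Obj_add, ← hG, ← hq] at this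
    have h3 : 0 ≤ t * (G + t * q) := by linarith
    exact nonneg_of_mul_nonneg_right h3 ht
  have hlim : Filter.Tendsto (fun t : ℝ => G + t * q) (nhdsWithin 0 (Set.Ioi 0))
      (nhds (G + 0 * q)) := by
    apply Filter.Tendsto.mono_left _ nhdsWithin_le_nhds
    exact Continuous.tendsto (by fun_prop) 0
  simpa using ge_of_tendsto hlim hpos

/-- A minimizer of (C') with slack in the quadratic constraint admits nonnegative multipliers
for the linear constraints alone. -/
lemma exists_multiplier {n m : ℕ} [NeZero n] (D : Matrix (Fin n) (Fin n) ℝ)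
    (ξ : Fin m → ℝ) (c : Fin n → ℝ) (a : Fin m → Fin n → ℝ) (b : Fin m → ℝ)
    (x : Fin n → ℝ) (w : ℝ) (hf : conv1Feas ξ a b x w)
    (hopt : ∀ y v, conv1Feas ξ a b y v → conv1Obj D c x w ≤ conv1Obj D c y v)
    (hlt : ∑ j, x j ^ 2 < w) :
    ∃ μ : Fin m → ℝ, (∀ i, 0 ≤ μ i) ∧ D 0 0 + ∑ i, ξ i * μ i = 0 ∧
      ∀ j, (D j j - D 0 0) * x j + c j + ∑ i, a i j * μ i = 0 := by
  classical
  obtain ⟨μ, h0, h1, h2⟩ := farkas (Finset.univ.filter fun i => linFun (ξ i) (a i) (x, w) = b i)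
    (fun i => linFun (ξ i) (a i)) (-linFun (D 0 0) (fun j => (D j j - D 0 0) * x j + c j)) (by
      intro d hd
      have := conv1_gradient_nonneg D ξ c a b x w hf hopt hlt d
        fun i hi => hd i (by simpa using hi)
      simpa using this)
  have h3 : ∀ v, -linFun (D 0 0) (fun j => (D j j - D 0 0) * x j + c j) v
      = ∑ i, μ i * linFun (ξ i) (a i) v := by
    intro v
    rw [← LinearMap.neg_apply, h2 v]
    refine Finset.sum_subset (Finset.subset_univ _) fun i _ hi => ?_
    rw [h1 i hi, zero_mul]
  refine ⟨μ, h0, ?_, fun j => ?_⟩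
  · have := h3 (0, 1)
    simp only [linFun_apply, Pi.zero_apply, mul_zero, Finset.sum_const_zero, mul_one,
      add_zero] at this
    simp only [mul_comm (ξ _)]
    linarith
  · have := h3 (Pi.single j 1, 0)
    simp only [linFun_apply, mul_zero, zero_add, Pi.single_apply, mul_ite, mul_one,
      Finset.sum_ite_eq', Finset.mem_univ, if_true] at this
    have e : ∑ i, μ i * (2 * a i j) = 2 * ∑ i, a i j * μ i := by
      rw [Finset.mul_sum]
      exact Finset.sum_congr rfl fun i _ => by ring
    rw [e] at this
    linarith

/-! ### Existence of a minimizer of (C') -/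

/-- The aggregated constraint `p w + 2 qᵀ x ≤ yᵀ b` with `p > 0` bounds `w`, because completing
squares gives `2 qᵀ x ≥ -(p / 2) w - const` as soon as `∑ xⱼ² ≤ w`. -/
lemma conv1_bounded {n m : ℕ} (ξ : Fin m → ℝ) (a : Fin m → Fin n → ℝ) (b : Fin m → ℝ)
    (y : Fin m → ℝ) (hy : ∀ i, 0 ≤ y i) (hpos : 0 < ∑ i, y i * ξ i) :
    ∃ W : ℝ, ∀ x w, conv1Feas ξ a b x w → w ≤ W := by
  set p := ∑ i, y i * ξ i with hp
  set q : Fin n → ℝ := fun j => ∑ i, y i * a i j with hq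
  refine ⟨(∑ i, y i * b i + ∑ j, 2 * q j ^ 2 / p) * 2 / p, fun x w hf => ?_⟩
  have hagg : p * w + 2 * ∑ j, q j * x j ≤ ∑ i, y i * b i := by
    calc p * w + 2 * ∑ j, q j * x j
        = ∑ i, y i * (ξ i * w + 2 * ∑ j, a i j * x j) := by
          simp only [hp, hq, mul_add, Finset.sum_add_distrib, Finset.sum_mul, Finset.mul_sum]
          congr 1
          · exact Finset.sum_congr rfl fun i _ => by ring
          · rw [Finset.sum_comm]
            exact Finset.sum_congr rfl fun i _ => Finset.sum_congr rfl fun j _ => by ring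
      _ ≤ ∑ i, y i * b i :=
          Finset.sum_le_sum fun i _ => mul_le_mul_of_nonneg_left (hf.1 i) (hy i)
  have hterm : -(p / 2 * ∑ j, x j ^ 2) - ∑ j, 2 * q j ^ 2 / p ≤ 2 * ∑ j, q j * x j := by
    rw [Finset.mul_sum, Finset.mul_sum, ← Finset.sum_neg_distrib, ← Finset.sum_sub_distrib]
    refine Finset.sum_le_sum fun j _ => ?_
    have : 0 ≤ (p * x j + 2 * q j) ^ 2 / (2 * p) := by positivity
    have e : (p * x j + 2 * q j) ^ 2 / (2 * p)
        = p / 2 * x j ^ 2 + 2 * (q j * x j) + 2 * q j ^ 2 / p := by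
      field_simp
      ring
    rw [e] at this
    linarith
  have hquad : p / 2 * ∑ j, x j ^ 2 ≤ p / 2 * w :=
    mul_le_mul_of_nonneg_left hf.2 (by positivity)
  rw [le_div_iff₀ hpos]
  linarith

lemma exists_conv1_minimizer {n m : ℕ} [NeZero n] (D : Matrix (Fin n) (Fin n) ℝ)
    (ξ : Fin m → ℝ) (c : Fin n → ℝ) (a : Fin m → Fin n → ℝ) (b : Fin m → ℝ)
    (y : Fin m → ℝ) (hy : ∀ i, 0 ≤ y i) (hpos : 0 < ∑ i, y i * ξ i)
    (hne : ∃ x w, conv1Feas ξ a b x w) :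
    ∃ x w, conv1Feas ξ a b x w ∧
      ∀ y v, conv1Feas ξ a b y v → conv1Obj D c x w ≤ conv1Obj D c y v := by
  obtain ⟨W, hW⟩ := conv1_bounded ξ a b y hy hpos
  have hclosed : IsClosed {p : (Fin n → ℝ) × ℝ | conv1Feas ξ a b p.1 p.2} := by
    simp only [conv1Feas, Set.ofPred_and, Set.ofPred_forall]
    refine IsClosed.inter (isClosed_iInter fun i => ?_) ?_
    · exact isClosed_le (by fun_prop) (by fun_prop)
    · exact isClosed_le (by fun_prop) (by fun_prop)
  have hcomp : IsCompact {p : (Fin n → ℝ) × ℝ | conv1Feas ξ a b p.1 p.2} := by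
    refine IsCompact.of_isClosed_subset
      (isCompact_Icc (a := ((fun _ => -(W + 1) : Fin n → ℝ), (0 : ℝ)))
        (b := ((fun _ => W + 1 : Fin n → ℝ), W))) hclosed ?_
    rintro ⟨x, w⟩ hf
    have hw : w ≤ W := hW x w hf
    have hsq : ∀ j, x j ^ 2 ≤ W := fun j =>
      (Finset.single_le_sum (f := fun j => x j ^ 2) (fun k _ => sq_nonneg (x k))
        (Finset.mem_univ j)).trans (hf.2.trans hw)
    have hw0 : 0 ≤ w := (Finset.sum_nonneg fun k _ => sq_nonneg (x k)).trans hf.2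
    refine ⟨⟨fun j => ?_, hw0⟩, ⟨fun j => ?_, hw⟩⟩
    · have := hsq j
      show -(W + 1) ≤ x j
      nlinarith [sq_nonneg (x j + 1)]
    · have := hsq j
      show x j ≤ W + 1
      nlinarith [sq_nonneg (x j - 1)]
  obtain ⟨x₀, w₀, h₀⟩ := hne
  have hcont : ContinuousOn (fun p : (Fin n → ℝ) × ℝ => conv1Obj D c p.1 p.2)
      {p | conv1Feas ξ a b p.1 p.2} := by
    unfold conv1Obj
    exact Continuous.continuousOn (by fun_prop)
  obtain ⟨p, hp, hmin⟩ := hcomp.exists_isMinOn ⟨(x₀, w₀), h₀⟩ hcont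
  exact ⟨p.1, p.2, hp, fun y v h => isMinOn_iff.1 hmin (y, v) h⟩

/-! ### Comparison of (P), the Shor relaxation and (C') -/

lemma quad_diag {n : ℕ} {B : Matrix (Fin n) (Fin n) ℝ} (hB : B.IsDiag) (x : Fin n → ℝ) :
    ∑ j, ∑ k, x j * B j k * x k = ∑ j, B j j * x j ^ 2 := by
  refine Finset.sum_congr rfl fun j _ => ?_
  rw [Finset.sum_eq_single j]
  · ring
  · intro k _ hk
    rw [hB hk.symm]
    ring
  · simp

lemma traceIP_diag {n : ℕ} {B : Matrix (Fin n) (Fin n) ℝ} (hB : B.IsDiag)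
    (X : Matrix (Fin n) (Fin n) ℝ) : traceIP B X = ∑ j, B j j * X j j := by
  refine Finset.sum_congr rfl fun j _ => ?_
  rw [Finset.sum_eq_single j]
  · intro k _ hk
    rw [hB hk.symm]
    ring
  · simp

lemma qFeas_iff_conv1Feas {n m : ℕ} {A : Fin m → Matrix (Fin n) (Fin n) ℝ}
    (hA : ∀ i, (A i).IsDiag) {ξ : Fin m → ℝ} (hξ : ∀ i j, A i j j = ξ i)
    (a : Fin m → Fin n → ℝ) (b : Fin m → ℝ) (x : Fin n → ℝ) :
    qFeas A a b x ↔ conv1Feas ξ a b x (∑ j, x j ^ 2) := by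
  simp only [qFeas, conv1Feas, quad_diag (hA _), hξ, ← Finset.mul_sum, le_refl, and_true]

lemma qObj_eq_conv1Obj {n : ℕ} [NeZero n] {D : Matrix (Fin n) (Fin n) ℝ} (hD : D.IsDiag)
    (c x : Fin n → ℝ) : qObj D c x = conv1Obj D c x (∑ j, x j ^ 2) := by
  simp only [qObj, conv1Obj, quad_diag hD, sub_mul, Finset.sum_sub_distrib, Finset.mul_sum]
  ring

lemma shor_diag_ge {n : ℕ} {X : Matrix (Fin n) (Fin n) ℝ} {x : Fin n → ℝ}
    (h : (X - vecMulVec x x).PosSemidef) (j : Fin n) : x j ^ 2 ≤ X j j := by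
  have := h.diag_nonneg (i := j)
  simp only [Matrix.sub_apply, vecMulVec_apply] at this
  nlinarith

lemma conv1Feas_of_shorFeas {n m : ℕ} {A : Fin m → Matrix (Fin n) (Fin n) ℝ}
    (hA : ∀ i, (A i).IsDiag) {ξ : Fin m → ℝ} (hξ : ∀ i j, A i j j = ξ i)
    {a : Fin m → Fin n → ℝ} {b : Fin m → ℝ} {X : Matrix (Fin n) (Fin n) ℝ} {x : Fin n → ℝ}
    (h : shorFeas A a b X x) : conv1Feas ξ a b x (∑ j, X j j) := by
  refine ⟨fun i => ?_, Finset.sum_le_sum fun j _ => shor_diag_ge h.2.2 j⟩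
  have := h.2.1 i
  simpa only [traceIP_diag (hA i), hξ, ← Finset.mul_sum] using this

lemma conv1Obj_le_shorObj {n : ℕ} [NeZero n] {D : Matrix (Fin n) (Fin n) ℝ} (hD : D.IsDiag)
    (hmin : ∀ j : Fin n, j ≠ 0 → D 0 0 < D j j) (c : Fin n → ℝ)
    {X : Matrix (Fin n) (Fin n) ℝ} {x : Fin n → ℝ} (h : (X - vecMulVec x x).PosSemidef) :
    conv1Obj D c x (∑ j, X j j) ≤ shorObj D c X x := by
  simp only [conv1Obj, shorObj, traceIP_diag hD]
  have : ∑ j, (D j j - D 0 0) * x j ^ 2 ≤ ∑ j, (D j j - D 0 0) * X j j := by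
    refine Finset.sum_le_sum fun j _ => mul_le_mul_of_nonneg_left (shor_diag_ge h j) ?_
    by_cases hj : j = 0
    · simp [hj]
    · exact sub_nonneg.2 (hmin j hj).le
  simp only [sub_mul, Finset.sum_sub_distrib, ← Finset.mul_sum] at this ⊢
  linarith

/-- The rank-one lift `x xᵀ` of a point of (P) is feasible for the Shor relaxation. -/
lemma shorFeas_rankOne {n m : ℕ} {A : Fin m → Matrix (Fin n) (Fin n) ℝ}
    {a : Fin m → Fin n → ℝ} {b : Fin m → ℝ} {x : Fin n → ℝ} (h : qFeas A a b x) :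
    shorFeas A a b (vecMulVec x x) x := by
  refine ⟨?_, fun i => ?_, ?_⟩
  · ext j k
    simp only [Matrix.transpose_apply, vecMulVec_apply]
    ring
  · have e : traceIP (A i) (vecMulVec x x) = ∑ j, ∑ k, x j * A i j k * x k := by
      refine Finset.sum_congr rfl fun j _ => Finset.sum_congr rfl fun k _ => ?_
      rw [vecMulVec_apply]
      ring
    rw [e]
    exact h i
  · rw [sub_self]
    exact Matrix.PosSemidef.zero

lemma shorObj_rankOne {n : ℕ} (D : Matrix (Fin n) (Fin n) ℝ) (c x : Fin n → ℝ) :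
    shorObj D c (vecMulVec x x) x = qObj D c x := by
  have e : traceIP D (vecMulVec x x) = ∑ j, ∑ k, x j * D j k * x k := by
    refine Finset.sum_congr rfl fun j _ => Finset.sum_congr rfl fun k _ => ?_
    rw [vecMulVec_apply]
    ring
  rw [shorObj, qObj, e]

/-! ### Exactness -/

/-- Proposition 4 of the paper: under Assumption 1 and the
`|H| = 1` hypothesis, if the convex program (Q) (minimizing `Σ_j x_j² - w` over
the set (21)) is infeasible or has nonnegative optimal value, then the second
convex relaxation (C') is exact, `q* = c*`, and hence the Shor relaxation is
exact, `v* = c*`. -/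
theorem statement14 {n m : ℕ} [NeZero n] (hm : 0 < m)
    (D : Matrix (Fin n) (Fin n) ℝ) (hD : D.IsDiag)
    (A : Fin m → Matrix (Fin n) (Fin n) ℝ) (hA : ∀ i, (A i).IsDiag)
    (c : Fin n → ℝ) (a : Fin m → Fin n → ℝ) (b : Fin m → ℝ)
    (ξ : Fin m → ℝ) (hξ : ∀ i j, A i j j = ξ i)
    (hmin : ∀ j : Fin n, j ≠ 0 → D 0 0 < D j j)
    (hass : Assumption1 A a b)
    (Qfeas : (Fin m → ℝ) → (Fin n → ℝ) → ℝ → Prop)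
    (hQfeas : ∀ μ x w, Qfeas μ x w ↔
      (∀ i, 0 ≤ μ i) ∧
      D 0 0 + (∑ i, ξ i * μ i) = 0 ∧
      c 0 + (∑ i, a i 0 * μ i) = 0 ∧
      (∀ j : Fin n, j ≠ 0 → (D j j - D 0 0) * x j + c j + (∑ i, a i j * μ i) = 0) ∧
      (∀ i, ξ i * w + 2 * ∑ j, a i j * x j ≤ b i))
    (hQ : (¬ ∃ μ x w, Qfeas μ x w) ∨
      (∀ μ x w, Qfeas μ x w → 0 ≤ (∑ j, x j ^ 2) - w)) :
    conv1Val D ξ c a b = qVal D A c a b ∧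
      shorVal D A c a b = qVal D A c a b := by
  obtain ⟨⟨x₀, hx₀⟩, ⟨y, hy, hyA⟩, -⟩ := hass
  have hpos : 0 < ∑ i, y i * ξ i := by
    have := hyA.diag_pos (i := 0)
    simpa [Matrix.sum_apply, hξ] using this
  obtain ⟨x, w, hf, hopt⟩ := exists_conv1_minimizer D ξ c a b y hy hpos
    ⟨x₀, _, (qFeas_iff_conv1Feas hA hξ a b x₀).1 hx₀⟩
  have hw : w = ∑ j, x j ^ 2 := by
    refine le_antisymm (not_lt.1 fun hlt => ?_) hf.2
    obtain ⟨μ, h0, h1, h2⟩ := exists_multiplier D ξ c a b x w hf hopt hlt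
    have hq : Qfeas μ x w := by
      refine (hQfeas μ x w).2 ⟨h0, h1, ?_, fun j _ => h2 j, hf.1⟩
      simpa using h2 0
    rcases hQ with hQ | hQ
    · exact hQ ⟨μ, x, w, hq⟩
    · have := hQ μ x w hq
      linarith
  subst hw
  have hxq : qFeas A a b x := (qFeas_iff_conv1Feas hA hξ a b x).2 hf
  have hc1 : conv1Val D ξ c a b = (qObj D c x : ℝ) := by
    apply le_antisymm
    · exact sInf_le ⟨x, _, hf, by rw [qObj_eq_conv1Obj hD]⟩
    · refine le_sInf ?_
      rintro _ ⟨z, v, hz, rfl⟩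
      rw [qObj_eq_conv1Obj hD]
      exact EReal.coe_le_coe_iff.2 (hopt z v hz)
  have hq : qVal D A c a b = (qObj D c x : ℝ) := by
    apply le_antisymm
    · exact sInf_le ⟨x, hxq, rfl⟩
    · refine le_sInf ?_
      rintro _ ⟨z, hz, rfl⟩
      rw [qObj_eq_conv1Obj hD, qObj_eq_conv1Obj hD]
      exact EReal.coe_le_coe_iff.2 (hopt z _ ((qFeas_iff_conv1Feas hA hξ a b z).1 hz))
  have hs : shorVal D A c a b = (qObj D c x : ℝ) := by
    apply le_antisymm
    · exact sInf_le ⟨_, x, shorFeas_rankOne hxq, by rw [shorObj_rankOne]⟩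
    · refine le_sInf ?_
      rintro _ ⟨X, z, hz, rfl⟩
      rw [qObj_eq_conv1Obj hD]
      exact EReal.coe_le_coe_iff.2 ((hopt z _ (conv1Feas_of_shorFeas hA hξ hz)).trans
        (conv1Obj_le_shorObj hD hmin c hz.2.2))
  exact ⟨hc1.trans hq.symm, hs.trans hq.symm⟩

end DiagQCQP2011
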